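/- For every integer c with 0 ≤ c ≤ 2000, if c = 10^x - y² for some integers x ≥ 0, y ≥ 0, then c = 10^x' - y'² for some integers 0 ≤ x' ≤ 7 and y' ≥ 0. -/

import Mathlib

/-!
If `10 ^ x - c` is a square with `x` even and `10 ^ (x / 2)` large compared to `c`, it is squeezed
between consecutive squares, so `c = 0`. For odd `x`, write `10 ^ x = 10 * 100 ^ k`. Modulo any
`m` the sequence `100 ^ k` is eventually periodic, so for large `k` it depends only on the residue
class of `k` whether `10 * 100 ^ k - c` is a square modulo `m`. With suitable moduli of a common
period, each residue class is excluded by one of them, unless `c` already arises from some `x ≤ 7`.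
-/

theorem eq_zero_of_isSquare_sq_sub {c z : ℤ} (hc : 0 ≤ c) (hcz : c < 2 * z - 1)
    (h : IsSquare (z ^ 2 - c)) : c = 0 := by
  obtain ⟨y, hy⟩ := h
  have hsq : |y| ^ 2 = z ^ 2 - c := by rw [sq_abs, hy, sq]
  have hle : |y| ≤ z := abs_le_of_sq_le_sq (by linarith [sq_abs y]) (by linarith)
  have hlt : z - 1 < |y| := lt_of_pow_lt_pow_left₀ 2 (abs_nonneg y) (by linarith [sub_sq z 1])
  obtain rfl : |y| = z := by omega
  linarith

theorem periodic_pow_add {M : Type*} [Monoid M] {g : M} {n d : ℕ} (h : g ^ (n + d) = g ^ n) :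
    Function.Periodic (fun r ↦ g ^ (n + r)) d := fun r ↦
  calc
    g ^ (n + (r + d)) = g ^ (n + d) * g ^ r := by rw [← pow_add, add_right_comm, add_assoc]
    _ = g ^ (n + r) := by rw [h, ← pow_add]

/-- The integer `c` survives the sieve by `moduli` if in some residue class modulo `d` the numbers
`a * g ^ k - c` pass for squares modulo every member of `moduli`. The class is represented by
`k = n + r`, where `d` is meant to be a period of `k ↦ g ^ k` from `n` on for each modulus.
Moduli are taken in `ℕ+` so that `ZMod m` is finite and the property is decidable. -/
def SurvivesSieve (a g : ℤ) (n d : ℕ) (moduli : List ℕ+) (c : ℤ) : Prop :=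
  ∃ r < d, ∀ m ∈ moduli, IsSquare ((a * g ^ (n + r) - c : ℤ) : ZMod m)

namespace SurvivesSieve

instance (a g : ℤ) (n d : ℕ) (moduli : List ℕ+) (c : ℤ) :
    Decidable (SurvivesSieve a g n d moduli c) :=
  inferInstanceAs (Decidable (∃ r < d, ∀ m ∈ moduli, _))

theorem of_isSquare {a g c : ℤ} {n d k : ℕ} {moduli : List ℕ+} (hd : 0 < d)
    (hperiod : ∀ m ∈ moduli, (g : ZMod m) ^ (n + d) = (g : ZMod m) ^ n) (hk : n ≤ k)
    (h : IsSquare (a * g ^ k - c)) : SurvivesSieve a g n d moduli c := by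
  obtain ⟨r, rfl⟩ := Nat.exists_eq_add_of_le hk
  refine ⟨r % d, Nat.mod_lt r hd, fun m hm ↦ ?_⟩
  have hmod : (g : ZMod m) ^ (n + r % d) = (g : ZMod m) ^ (n + r) :=
    (periodic_pow_add (hperiod m hm)).map_mod_nat r
  have hsq : IsSquare ((a * g ^ (n + r) - c : ℤ) : ZMod m) := h.map (Int.castRingHom (ZMod m))
  push_cast at hsq ⊢
  rwa [hmod]

end SurvivesSieve

-- The moduli divide `99 * 10 ^ 9`, `10 ^ 6 - 1` and `10 ^ 84 - 1` respectively. A single sieve of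
-- period 42 by all of them would do; sieving first with periods 1 and 3 leaves few `c` for it.
theorem exists_isSquare_of_survivesSieve : ∀ c < 2001,
    SurvivesSieve 10 100 4 1 [9, 11, 64, 125] (c : ℕ) →
    SurvivesSieve 10 100 4 3 [7, 13, 37] c →
    SurvivesSieve 10 100 4 42 [29, 43, 49, 101, 127, 239] c →
    ∃ x < 8, IsSquare ((10 : ℤ) ^ x - c) := by
  decide +kernel

theorem exists_isSquare_of_odd {c : ℤ} (hc0 : 0 ≤ c) (hc : c ≤ 2000) {k : ℕ} (hk : 4 ≤ k)
    (h : IsSquare ((10 : ℤ) ^ (2 * k + 1) - c)) : ∃ x < 8, IsSquare ((10 : ℤ) ^ x - c) := by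
  lift c to ℕ using hc0
  have hsq : IsSquare ((10 : ℤ) * 100 ^ k - c) := by
    rwa [pow_succ', pow_mul, show (10 : ℤ) ^ 2 = 100 by norm_num] at h
  exact exists_isSquare_of_survivesSieve c (by omega)
    (.of_isSquare (by norm_num) (by decide +kernel) hk hsq)
    (.of_isSquare (by norm_num) (by decide +kernel) hk hsq)
    (.of_isSquare (by norm_num) (by decide +kernel) hk hsq)

theorem A051221_complete (c : ℤ) (hc0 : 0 ≤ c) (hc : c ≤ 2000)
    (h : ∃ (x : ℕ) (y : ℤ), 0 ≤ y ∧ c = (10 : ℤ)^x - y^2) :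
    ∃ (x' : ℕ) (y' : ℤ), x' ≤ 7 ∧ 0 ≤ y' ∧ c = (10 : ℤ)^x' - y'^2 := by
  obtain ⟨x, y, -, hxy⟩ := h
  suffices hsmall : ∃ x' < 8, IsSquare ((10 : ℤ) ^ x' - c) by
    obtain ⟨x', hx', z, hz⟩ := hsmall
    exact ⟨x', |z|, by omega, abs_nonneg z, by rw [sq_abs, sq, ← hz, sub_sub_cancel]⟩
  have hsq : IsSquare ((10 : ℤ) ^ x - c) := ⟨y, by rw [hxy]; ring⟩
  rcases lt_or_ge x 8 with hx | hx
  · exact ⟨x, hx, hsq⟩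
  obtain ⟨k, rfl | rfl⟩ := x.even_or_odd'
  · have hpow : (10 : ℤ) ^ 4 ≤ 10 ^ k := pow_le_pow_right₀ (by norm_num) (by omega)
    rw [mul_comm, pow_mul] at hsq
    obtain rfl : c = 0 := eq_zero_of_isSquare_sq_sub hc0 (by linarith) hsq
    exact ⟨0, by norm_num, 1, by norm_num⟩
  · exact exists_isSquare_of_odd hc0 hc (by omega) hsq
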